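/- Let G be a finite 3-group which is semi-3-abelian, generated by elements a₁, …, a_n with |G/Φ(G)| = 3^n (where Φ(G) is the Frattini subgroup). If for some index i and some natural number m the element x = a_i^m lies in Ω₁(G), then x ∈ Z_n(G), the n-th term of the upper central series of G. -/

import Mathlib

open scoped commutatorElement

section UnipotentAction

variable {G R : Type*} [Group G] [Ring R] {ρ : G →* R}

lemma sub_one_mul_self_eq_zero (h3 : (3 : R) = 0)
    (hρ : ∀ g, ρ g * ρ g + ρ g + 1 = 0) (g : G) : (ρ g - 1) * (ρ g - 1) = 0 := by
  calc (ρ g - 1) * (ρ g - 1) = (ρ g * ρ g + ρ g + 1) - 3 * ρ g := by noncomm_ring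
    _ = 0 := by rw [hρ, h3, zero_mul, sub_zero]

lemma map_mul_sub_one (g h : G) :
    ρ (g * h) - 1 = (ρ g - 1) * (ρ h - 1) + (ρ g - 1) + (ρ h - 1) := by
  rw [map_mul]; noncomm_ring

lemma sub_one_mul_sub_one_anticomm (hρ : ∀ g, (ρ g - 1) * (ρ g - 1) = 0) (g h : G) :
    (ρ g - 1) * (ρ h - 1) = -((ρ h - 1) * (ρ g - 1)) := by
  have hA := hρ g
  have hB := hρ h
  have hAB := hρ (g * h)
  rw [map_mul_sub_one] at hAB
  generalize ρ g - 1 = A at *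
  generalize ρ h - 1 = B at *
  have hexp : A * B + B * A + A * B * A + B * A * B + A * B * A * B = 0 := by
    calc _ = (A * B + A + B) * (A * B + A + B) - A * A - B * B - A * A * B - A * (B * B)
        := by noncomm_ring
      _ = 0 := by rw [hAB, hA, hB]; simp
  have hABAB : A * B * A * B = 0 := by
    calc _ = A * (A * B + B * A + A * B * A + B * A * B + A * B * A * B) * B
          - A * A * B * B - A * A * B * A * B - A * B * A * (B * B)
          - A * A * B * A * B * B := by noncomm_ring
      _ = 0 := by rw [hexp, hA, hB]; simp
  have hABA : A * B * A = 0 := by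
    calc _ = A * (A * B + B * A + A * B * A + B * A * B + A * B * A * B)
          - A * A * B - A * A * B * A - A * B * A * B - A * A * B * A * B := by noncomm_ring
      _ = 0 := by rw [hexp, hA, hABAB]; simp
  have hBAB : B * A * B = 0 := by
    calc _ = (A * B + B * A + A * B * A + B * A * B + A * B * A * B) * B
          - A * (B * B) - A * B * A * B - B * A * (B * B) - A * B * A * (B * B) := by noncomm_ring
      _ = 0 := by rw [hexp, hB, hABAB]; simp
  rw [hABAB, hABA, hBAB] at hexp
  exact eq_neg_of_add_eq_zero_left (by simpa using hexp)

lemma sub_one_triple_mul_eq_zero (h3 : (3 : R) = 0)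
    (hρ : ∀ g, (ρ g - 1) * (ρ g - 1) = 0) (g h k : G) :
    (ρ g - 1) * (ρ h - 1) * (ρ k - 1) = 0 := by
  have hgk := sub_one_mul_sub_one_anticomm hρ g k
  have hhk := sub_one_mul_sub_one_anticomm hρ h k
  have hghk := sub_one_mul_sub_one_anticomm hρ (g * h) k
  rw [map_mul_sub_one] at hghk
  generalize ρ g - 1 = A at *
  generalize ρ h - 1 = B at *
  generalize ρ k - 1 = C at *
  have hanti : A * B * C = -(C * A * B) := by
    calc A * B * C = (A * B + A + B) * C - A * C - B * C := by noncomm_ring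
      _ = -(C * A * B) := by rw [hghk, hgk, hhk]; noncomm_ring
  have hcomm : A * B * C = C * A * B := by
    rw [mul_assoc, hhk, mul_neg, ← mul_assoc, hgk, neg_mul, neg_neg]
  calc A * B * C = 3 * (A * B * C) - A * B * C - A * B * C := by noncomm_ring
    _ = 0 := by
      rw [h3, zero_mul]; nth_rw 1 [hanti]; rw [hcomm]; noncomm_ring

end UnipotentAction

section SemiThreeAbelian

open scoped IsMulCommutative

variable {G : Type*} [Group G]

lemma mul_inv_cube_eq_one_iff (hsemi : ∀ a b : G, (a * b) ^ 3 = 1 ↔ a ^ 3 * b ^ 3 = 1) (a b : G) :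
    (a * b⁻¹) ^ 3 = 1 ↔ a ^ 3 = b ^ 3 := by
  rw [hsemi, inv_pow, mul_inv_eq_one]

lemma cube_eq_one_of_mem_closure (hsemi : ∀ a b : G, (a * b) ^ 3 = 1 ↔ a ^ 3 * b ^ 3 = 1)
    {x : G} (hx : x ∈ Subgroup.closure {g : G | g ^ 3 = 1}) : x ^ 3 = 1 := by
  induction hx using Subgroup.closure_induction with
  | mem x hx => exact hx
  | one => simp
  | mul x y _ _ hx hy => rw [hsemi, hx, hy, one_mul]
  | inv x _ hx => rw [inv_pow, hx, inv_one]

lemma conj_mul_conj_mul_eq_one (hsemi : ∀ a b : G, (a * b) ^ 3 = 1 ↔ a ^ 3 * b ^ 3 = 1)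
    {x : G} (hx : x ^ 3 = 1) (g : G) :
    x * (g * x * g⁻¹) * (g * (g * x * g⁻¹) * g⁻¹) = 1 := by
  have h : (x * g) ^ 3 = g ^ 3 := by
    rw [← mul_inv_cube_eq_one_iff hsemi, mul_inv_cancel_right, hx]
  calc _ = (x * g) ^ 3 * (g ^ 3)⁻¹ := by simp [pow_succ, mul_assoc]
    _ = 1 := by rw [h, mul_inv_cancel]

lemma commute_cube (hsemi : ∀ a b : G, (a * b) ^ 3 = 1 ↔ a ^ 3 * b ^ 3 = 1)
    {x : G} (hx : x ^ 3 = 1) (g : G) : x * g ^ 3 = g ^ 3 * x := by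
  have hconj : (x * g * x⁻¹) ^ 3 = g ^ 3 := by
    rw [← mul_inv_cube_eq_one_iff hsemi, mul_assoc, mul_assoc, hsemi, hx, one_mul,
      ← mul_assoc, conj_pow, inv_pow, hx]
    simp
  rwa [conj_pow, mul_inv_eq_iff_eq_mul] at hconj

lemma commute_conj (hsemi : ∀ a b : G, (a * b) ^ 3 = 1 ↔ a ^ 3 * b ^ 3 = 1)
    {x : G} (hx : x ^ 3 = 1) (g : G) : x * (g * x * g⁻¹) = (g * x * g⁻¹) * x := by
  have hxg := conj_mul_conj_mul_eq_one hsemi hx g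
  have hgx := conj_mul_conj_mul_eq_one hsemi
    (show (g * x * g⁻¹) ^ 3 = 1 by rw [conj_pow, hx, mul_one, mul_inv_cancel]) g⁻¹
  have hconj : g * (g * x * g⁻¹) * g⁻¹ = g⁻¹ * x * g := by
    calc _ = g⁻¹ * (g ^ 3 * x) * g⁻¹ * g⁻¹ := by simp [pow_succ, mul_assoc]
      _ = g⁻¹ * x * g := by rw [← commute_cube hsemi hx]; simp [pow_succ, mul_assoc]
  have hcancel : g⁻¹ * (g * x * g⁻¹) * g⁻¹⁻¹ = x := by simp [mul_assoc]
  rw [hcancel, inv_inv] at hgx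
  rw [hconj] at hxg
  exact mul_right_cancel (hxg.trans hgx.symm)

lemma isMulCommutative_normalClosure
    (hsemi : ∀ a b : G, (a * b) ^ 3 = 1 ↔ a ^ 3 * b ^ 3 = 1) {x : G} (hx : x ^ 3 = 1) :
    IsMulCommutative (Subgroup.normalClosure {x}) := by
  refine Subgroup.isMulCommutative_closure fun y hy z hz ↦ ?_
  simp only [Group.mem_conjugatesOfSet_iff, Set.mem_singleton_iff, exists_eq_left,
    isConj_iff] at hy hz
  obtain ⟨c, rfl⟩ := hy
  obtain ⟨d, rfl⟩ := hz
  have h := commute_conj hsemi (x := c * x * c⁻¹)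
    (by rw [conj_pow, hx, mul_one, mul_inv_cancel]) (d * c⁻¹)
  have hconj : d * c⁻¹ * (c * x * c⁻¹) * (d * c⁻¹)⁻¹ = d * x * d⁻¹ := by group
  rwa [hconj] at h

lemma cube_eq_one_of_mem_normalClosure
    (hsemi : ∀ a b : G, (a * b) ^ 3 = 1 ↔ a ^ 3 * b ^ 3 = 1) {x y : G} (hx : x ^ 3 = 1)
    (hy : y ∈ Subgroup.normalClosure {x}) : y ^ 3 = 1 := by
  refine cube_eq_one_of_mem_closure hsemi (Subgroup.closure_mono ?_ hy)
  intro z hz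
  simp only [Group.mem_conjugatesOfSet_iff, Set.mem_singleton_iff, exists_eq_left,
    isConj_iff] at hz
  obtain ⟨c, rfl⟩ := hz
  simp [conj_pow, hx]

/-- The conjugation action of `G` on an abelian normal subgroup, written additively. -/
def conjEnd (N : Subgroup G) [N.Normal] [IsMulCommutative N] :
    G →* AddMonoid.End (Additive N) where
  toFun g := MonoidHom.toAdditive (MulAut.conjNormal (H := N) g).toMonoidHom
  map_one' := by rw [map_one]; rfl
  map_mul' g h := by rw [map_mul]; rfl

lemma conjEnd_apply (N : Subgroup G) [N.Normal] [IsMulCommutative N] (g : G) (v : Additive N) :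
    (((conjEnd N g v).toMul : N) : G) = g * (v.toMul : G) * g⁻¹ :=
  MulAut.conjNormal_apply g v.toMul

lemma conjEnd_sub_one_apply (N : Subgroup G) [N.Normal] [IsMulCommutative N] (g : G)
    (v : Additive N) :
    ((((conjEnd N g - 1) v).toMul : N) : G) = ⁅g, (v.toMul : G)⁆ := by
  change ((((conjEnd N g v - v).toMul) : N) : G) = _
  rw [toMul_sub, Subgroup.coe_div, conjEnd_apply, div_eq_mul_inv, commutatorElement_def]

/-- An element of order dividing `3` lies in an abelian normal subgroup on which every `g - 1`
has square zero. -/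
lemma exists_normal_conjEnd (hsemi : ∀ a b : G, (a * b) ^ 3 = 1 ↔ a ^ 3 * b ^ 3 = 1)
    {x : G} (hx : x ^ 3 = 1) :
    ∃ (N : Subgroup G) (_ : N.Normal) (_ : IsMulCommutative N), x ∈ N ∧
      (3 : AddMonoid.End (Additive N)) = 0 ∧
      ∀ g, (conjEnd N g - 1) * (conjEnd N g - 1) = 0 := by
  have hcomm := isMulCommutative_normalClosure hsemi hx
  set N := Subgroup.normalClosure {x}
  have h3 : (3 : AddMonoid.End (Additive N)) = 0 := by
    ext v
    have hv := cube_eq_one_of_mem_normalClosure hsemi hx v.toMul.2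
    rw [← Nat.cast_ofNat, AddMonoid.End.natCast_apply]
    exact hv
  refine ⟨_, Subgroup.normalClosure_normal, hcomm,
    Subgroup.subset_normalClosure (Set.mem_singleton x), h3,
    sub_one_mul_self_eq_zero h3 fun g ↦ ?_⟩
  refine DFunLike.ext _ _ fun v ↦ Subtype.ext ?_
  have hv := conj_mul_conj_mul_eq_one hsemi
    (cube_eq_one_of_mem_normalClosure hsemi hx v.toMul.2) g
  have hsum : conjEnd N g (conjEnd N g v) + conjEnd N g v + v
      = v + conjEnd N g v + conjEnd N g (conjEnd N g v) := by abel
  change (((conjEnd N g (conjEnd N g v) + conjEnd N g v + v).toMul : N) : G) = 1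
  rw [hsum]
  simpa only [toMul_add, Subgroup.coe_mul, conjEnd_apply] using hv

lemma commutator_commutator_self_eq_one
    (hsemi : ∀ a b : G, (a * b) ^ 3 = 1 ↔ a ^ 3 * b ^ 3 = 1) {x : G} (hx : x ^ 3 = 1) (g : G) :
    ⁅g, ⁅g, x⁆⁆ = 1 := by
  obtain ⟨N, _, _, hxN, h3, hN⟩ := exists_normal_conjEnd hsemi hx
  have hv := DFunLike.congr_fun (hN g) (Additive.ofMul ⟨x, hxN⟩)
  have hvG := congrArg (fun v : Additive N ↦ (v.toMul : G)) hv
  simpa only [AddMonoid.End.coe_mul, Function.comp_apply, AddMonoid.End.zero_apply, toMul_zero,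
    toMul_ofMul, Subgroup.coe_one, conjEnd_sub_one_apply] using hvG

lemma commutator_commutator_swap
    (hsemi : ∀ a b : G, (a * b) ^ 3 = 1 ↔ a ^ 3 * b ^ 3 = 1) {x : G} (hx : x ^ 3 = 1) (g h : G) :
    ⁅g, ⁅h, x⁆⁆ = ⁅h, ⁅g, x⁆⁆⁻¹ := by
  obtain ⟨N, _, _, hxN, h3, hN⟩ := exists_normal_conjEnd hsemi hx
  have hsum : (conjEnd N g - 1) * (conjEnd N h - 1) + (conjEnd N h - 1) * (conjEnd N g - 1) = 0 :=
    eq_neg_iff_add_eq_zero.mp (sub_one_mul_sub_one_anticomm hN g h)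
  let v : Additive N := Additive.ofMul ⟨x, hxN⟩
  have hv : (conjEnd N g - 1) ((conjEnd N h - 1) v) + (conjEnd N h - 1) ((conjEnd N g - 1) v) = 0 :=
    DFunLike.congr_fun hsum v
  have hvG := congrArg (fun v : Additive N ↦ (v.toMul : G)) hv
  refine eq_inv_of_mul_eq_one_left ?_
  simpa only [v, toMul_ofMul, toMul_add, Subgroup.coe_mul, toMul_zero, Subgroup.coe_one,
    conjEnd_sub_one_apply] using hvG

lemma commutator_commutator_commutator_eq_one
    (hsemi : ∀ a b : G, (a * b) ^ 3 = 1 ↔ a ^ 3 * b ^ 3 = 1) {x : G} (hx : x ^ 3 = 1)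
    (g h k : G) : ⁅g, ⁅h, ⁅k, x⁆⁆⁆ = 1 := by
  obtain ⟨N, _, _, hxN, h3, hN⟩ := exists_normal_conjEnd hsemi hx
  have hv := DFunLike.congr_fun (sub_one_triple_mul_eq_zero h3 hN g h k)
    (Additive.ofMul ⟨x, hxN⟩)
  have hvG := congrArg (fun v : Additive N ↦ (v.toMul : G)) hv
  simpa only [AddMonoid.End.coe_mul, Function.comp_apply, AddMonoid.End.zero_apply, toMul_zero,
    toMul_ofMul, Subgroup.coe_one, conjEnd_sub_one_apply] using hvG

end SemiThreeAbelian

section UpperCentralSeries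

variable {G : Type*} [Group G]

lemma mem_upperCentralSeries_succ_iff_commutator {n : ℕ} {x : G} :
    x ∈ Subgroup.upperCentralSeries G (n + 1) ↔
      ∀ g : G, ⁅g, x⁆ ∈ Subgroup.upperCentralSeries G n := by
  rw [Subgroup.mem_upperCentralSeries_succ_iff]
  refine forall_congr' fun g ↦ ?_
  rw [← commutatorElement_inv, inv_mem_iff]

lemma mem_center_of_forall_commutator_eq_one {s : Set G} (hs : Subgroup.closure s = ⊤) {x : G}
    (hx : ∀ g ∈ s, ⁅g, x⁆ = 1) : x ∈ Subgroup.center G := by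
  rw [← Subgroup.centralizer_univ, ← Subgroup.coe_top, ← hs, Subgroup.centralizer_closure]
  exact Subgroup.mem_centralizer_iff_commutator_eq_one.mpr hx

end UpperCentralSeries


/-- In a finite semi-3-abelian 3-group generated by `n` elements `a₁, …, a_n` with
`|G/Φ(G)| = 3^n`, if `x = a_i ^ m` lies in `Ω₁(G)` then `x ∈ Z_n(G)`. -/
theorem semi3abelian_generator_power_in_Zn (G : Type*) [Group G] [Finite G]
    (hG : IsPGroup 3 G)
    (hsemi : ∀ a b : G, (a * b) ^ 3 = 1 ↔ a ^ 3 * b ^ 3 = 1)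
    (n : ℕ) (a : Fin n → G) (hgen : Subgroup.closure (Set.range a) = ⊤)
    (hcard : Nat.card (G ⧸ frattini G) = 3 ^ n)
    (i : Fin n) (m : ℕ) (x : G) (hxm : x = a i ^ m)
    (hx : x ∈ Subgroup.closure {g : G | g ^ 3 = 1}) :
    x ∈ upperCentralSeries G n := by
  change x ∈ Subgroup.upperCentralSeries G n
  have hx3 := cube_eq_one_of_mem_closure hsemi hx
  have hcomm : ⁅a i, x⁆ = 1 := by
    rw [hxm, commutatorElement_eq_one_iff_commute]
    exact (Commute.refl _).pow_right m
  obtain _ | _ | _ | n := n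
  · exact i.elim0
  · rw [zero_add, Subgroup.upperCentralSeries_one]
    refine mem_center_of_forall_commutator_eq_one hgen ?_
    rintro _ ⟨j, rfl⟩
    rwa [show j = i by omega]
  · have hzero : ∀ j k, ⁅a j, ⁅a k, x⁆⁆ = 1 := by
      intro j k
      by_cases hk : k = i
      · rw [hk, hcomm, commutatorElement_one_right]
      by_cases hj : j = i
      · rw [commutator_commutator_swap hsemi hx3, hj, hcomm, commutatorElement_one_right, inv_one]
      rw [show j = k by omega]
      exact commutator_commutator_self_eq_one hsemi hx3 _
    have hcenter : ∀ k, ⁅a k, x⁆ ∈ Subgroup.center G := fun k ↦ by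
      refine mem_center_of_forall_commutator_eq_one hgen ?_
      rintro _ ⟨j, rfl⟩
      exact hzero j k
    rw [mem_upperCentralSeries_succ_iff_commutator, Subgroup.upperCentralSeries_one]
    refine fun g ↦ mem_center_of_forall_commutator_eq_one hgen ?_
    rintro _ ⟨k, rfl⟩
    rw [commutator_commutator_swap hsemi hx3, inv_eq_one, commutatorElement_eq_one_iff_mul_comm]
    exact Subgroup.mem_center_iff.mp (hcenter k) g
  · refine Subgroup.upperCentralSeries_mono G (show 3 ≤ n + 1 + 1 + 1 by omega) ?_
    simp only [mem_upperCentralSeries_succ_iff_commutator, Subgroup.upperCentralSeries_zero,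
      Subgroup.mem_bot]
    exact fun k h g ↦ commutator_commutator_commutator_eq_one hsemi hx3 g h k
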